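/- Let (Y,d) be a finite metric space with exactly n elements y_1,…,y_n, let a > 2 be an integer, and suppose diam(Y) > (2a+1)^{n+2}. Define A_0(i) = {y_i}, d_0 = 1, and inductively A_m(i) = {y ∈ Y : d(y, A_{m-1}(i)) ≤ a·d_{m-1}} and d_m = max over 1 ≤ j ≤ n of max{diam(A_m(j)), 1}; let k be the minimal index with A_k(i) = A_{k+1}(i) for all i, and set A_i = A_k(i). Then for every i ∈ {1,…,n}, A_i ≠ Y. -/

import Mathlib

/-- The iterative "galaxy" construction on a finite metric space with points `y 1, …, y n`:
`A 0 i = {y i}`, `d 0 = 1`, and inductively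
`A (m+1) i = {z | d(z, A m i) ≤ a · d m}`, `d (m+1) = max_j max (diam (A (m+1) j)) 1`.
`galaxy a y m = (A m, d m)`. -/
noncomputable def galaxy {Y : Type*} [MetricSpace Y] {n : ℕ} (a : ℕ) (y : Fin n → Y) :
    ℕ → (Fin n → Set Y) × ℝ
  | 0 => (fun i => {y i}, 1)
  | m + 1 =>
      let p := galaxy a y m
      let A : Fin n → Set Y := fun i => {z : Y | Metric.infDist z (p.1 i) ≤ (a : ℝ) * p.2}
      (A, ⨆ j, max (Metric.diam (A j)) 1)

/-!
Color each point of `Y` by itself. While two color classes come within `a` times the current bound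
`D` on the diameters of the classes, merge them and replace `D` by `(a + 2) * D`. This stops after
fewer than `card Y` merges, with classes of diameter at most some `E ≤ (a + 2) ^ (card Y - 1)` that
are more than `a * E` apart. By induction no galaxy ever leaves the class of its starting point, so
its diameter is at most `E`, which is less than that of `Y`.
-/

open Function Set

/-- A coloring `f` of `Y` whose color classes have diameter at most `D` and are pairwise more than
`a * D` apart: the clusters that confine the galaxies. Both conditions are stated pointwise, since
`Metric.diam` is zero on unbounded sets. -/
structure IsSeparatedColoring {Y ι : Type*} [PseudoMetricSpace Y] (f : Y → ι) (a D : ℝ) :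
    Prop where
  dist_le : ∀ ⦃u v⦄, f u = f v → dist u v ≤ D
  eq_of_dist_le : ∀ ⦃u v⦄, dist u v ≤ a * D → f u = f v

section Coloring

variable {Y ι : Type*}

theorem encard_range_update_id_comp_add_one_le [DecidableEq ι] {f : Y → ι} {i j : ι}
    (hi : i ∈ range f) (hj : j ∈ range f) (hij : i ≠ j) :
    (range (update id i j ∘ f)).encard + 1 ≤ (range f).encard := by
  have hsub : range (update id i j ∘ f) ⊆ range f \ {i} := by
    rintro _ ⟨z, rfl⟩
    by_cases hz : f z = i
    · simpa [hz] using And.intro hj hij.symm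
    · simp [hz]
  calc (range (update id i j ∘ f)).encard + 1 ≤ (range f \ {i}).encard + 1 := by gcongr
    _ = (range f).encard := encard_sdiff_singleton_add_one hi

variable [PseudoMetricSpace Y]

theorem dist_le_of_update_id_comp_eq [DecidableEq ι] {f : Y → ι} {D : ℝ}
    (hf : ∀ u v, f u = f v → dist u v ≤ D) (x y : Y) {u v : Y}
    (huv : (update id (f x) (f y) ∘ f) u = (update id (f x) (f y) ∘ f) v) :
    dist u v ≤ D + dist x y + D := by
  have hD : 0 ≤ D := by simpa using hf x x rfl
  have hD_le : D ≤ D + dist x y + D := by linarith [dist_nonneg (x := x) (y := y)]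
  have across {p q : Y} (hp : f p = f x) (hq : f q = f y) : dist p q ≤ D + dist x y + D :=
    (dist_triangle4 p x y q).trans <| by gcongr <;> exact hf _ _ (by simp only [hp, hq])
  simp only [comp_apply, update_apply, id_eq] at huv
  split_ifs at huv with hu hv hv
  · exact (hf u v (hu.trans hv.symm)).trans hD_le
  · exact across hu huv.symm
  · exact dist_comm u v ▸ across hv huv
  · exact (hf u v huv).trans hD_le

theorem exists_isSeparatedColoring {a D : ℝ} (ha : 0 ≤ a) (hD : 0 ≤ D) {c : ℕ} {f : Y → ι}
    (hcard : (range f).encard ≤ c + 1) (hf : ∀ u v, f u = f v → dist u v ≤ D) :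
    ∃ (g : Y → ι) (E : ℝ), D ≤ E ∧ E ≤ D * (a + 2) ^ c ∧ IsSeparatedColoring g a E := by
  classical
  induction c generalizing f D with
  | zero =>
    have hconst (u v : Y) : f u = f v :=
      encard_le_one_iff.mp (by simpa using hcard) _ _ (mem_range_self u) (mem_range_self v)
    exact ⟨f, D, le_rfl, by simp, hf, fun u v _ => hconst u v⟩
  | succ c ih =>
    by_cases hsep : ∀ u v, dist u v ≤ a * D → f u = f v
    · exact ⟨f, D, le_rfl, le_mul_of_one_le_right hD (one_le_pow₀ (by linarith)), hf, hsep⟩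
    · push Not at hsep
      obtain ⟨x, y, hxy, hne⟩ := hsep
      have hcard' : (range (update id (f x) (f y) ∘ f)).encard ≤ c + 1 := by
        have hlt := encard_range_update_id_comp_add_one_le (mem_range_self x) (mem_range_self y) hne
        exact (ENat.add_le_add_iff_right ENat.one_ne_top).mp (hlt.trans (mod_cast hcard))
      have hf' (u v) (huv : (update id (f x) (f y) ∘ f) u = (update id (f x) (f y) ∘ f) v) :
          dist u v ≤ D * (a + 2) := by
        linarith [dist_le_of_update_id_comp_eq hf x y huv]
      obtain ⟨g, E, hDE, hE, hg⟩ := ih (by positivity) hcard' hf'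
      exact ⟨g, E, (le_mul_of_one_le_right hD (by linarith)).trans hDE,
        hE.trans_eq (by ring), hg⟩

theorem IsSeparatedColoring.diam_le {f : Y → ι} {a D : ℝ} (hf : IsSeparatedColoring f a D)
    (hD : 0 ≤ D) {s : Set Y} {c : ι} (hs : ∀ z ∈ s, f z = c) : Metric.diam s ≤ D :=
  Metric.diam_le_of_forall_dist_le hD fun u hu v hv =>
    hf.dist_le ((hs u hu).trans (hs v hv).symm)

end Coloring

section Galaxy

variable {Y : Type*} [MetricSpace Y] {n a : ℕ} {y : Fin n → Y}

theorem mem_galaxy_succ {m : ℕ} {i : Fin n} {z : Y} :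
    z ∈ (galaxy a y (m + 1)).1 i ↔
      Metric.infDist z ((galaxy a y m).1 i) ≤ a * (galaxy a y m).2 :=
  Iff.rfl

theorem galaxy_snd_succ (m : ℕ) :
    (galaxy a y (m + 1)).2 = ⨆ j, max (Metric.diam ((galaxy a y (m + 1)).1 j)) 1 :=
  rfl

theorem galaxy_snd_nonneg (m : ℕ) : 0 ≤ (galaxy a y m).2 := by
  cases m with
  | zero => exact zero_le_one
  | succ m => exact Real.iSup_nonneg fun _ => zero_le_one.trans (le_max_right _ _)

theorem self_mem_galaxy (m : ℕ) (i : Fin n) : y i ∈ (galaxy a y m).1 i := by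
  induction m with
  | zero => exact mem_singleton _
  | succ m ih =>
    rw [mem_galaxy_succ, Metric.infDist_zero_of_mem ih]
    exact mul_nonneg a.cast_nonneg (galaxy_snd_nonneg m)

theorem IsSeparatedColoring.galaxy_confined [Finite Y] {ι : Type*} {g : Y → ι} {E : ℝ}
    (hg : IsSeparatedColoring g a E) (hE : 1 ≤ E) (m : ℕ) :
    (galaxy a y m).2 ≤ E ∧ ∀ i, ∀ z ∈ (galaxy a y m).1 i, g z = g (y i) := by
  induction m with
  | zero => exact ⟨hE, fun i z hz => congrArg g hz⟩
  | succ m ih =>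
    obtain ⟨hd, hA⟩ := ih
    have hA' : ∀ i, ∀ z ∈ (galaxy a y (m + 1)).1 i, g z = g (y i) := by
      intro i z hz
      obtain ⟨w, hw, hzw⟩ := (toFinite ((galaxy a y m).1 i)).isCompact.exists_infDist_eq_dist
        ⟨y i, self_mem_galaxy m i⟩ z
      have hdist : dist z w ≤ a * E :=
        calc dist z w ≤ a * (galaxy a y m).2 := hzw ▸ mem_galaxy_succ.mp hz
          _ ≤ a * E := by gcongr
      exact (hg.eq_of_dist_le hdist).trans (hA i w hw)
    have hE₀ : 0 ≤ E := zero_le_one.trans hE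
    refine ⟨?_, hA'⟩
    rw [galaxy_snd_succ]
    exact Real.iSup_le (fun j => max_le (hg.diam_le hE₀ (hA' j)) hE) hE₀

end Galaxy

theorem galaxy_ne_univ_general {Y : Type*} [MetricSpace Y] [Finite Y] {n a : ℕ} (y : Fin n → Y)
    (hdiam : ((a + 2 : ℕ) : ℝ) ^ (Nat.card Y - 1) < Metric.diam (univ : Set Y))
    (m : ℕ) (i : Fin n) : (galaxy a y m).1 i ≠ univ := by
  intro huniv
  have hcard : (range (id : Y → Y)).encard ≤ (Nat.card Y - 1 : ℕ) + 1 := by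
    rw [range_id, encard_univ, ENat.card_eq_coe_natCard]
    exact_mod_cast le_tsub_add
  obtain ⟨g, E, hE, hE_le, hg⟩ := exists_isSeparatedColoring (a := a) a.cast_nonneg zero_le_one
    hcard fun u v huv => (dist_eq_zero.mpr huv).trans_le zero_le_one
  have hclass : ∀ z ∈ (univ : Set Y), g z = g (y i) := huniv ▸ (hg.galaxy_confined hE m).2 i
  refine hdiam.not_ge ?_
  calc Metric.diam (univ : Set Y) ≤ E := hg.diam_le (zero_le_one.trans hE) hclass
    _ ≤ ((a + 2 : ℕ) : ℝ) ^ (Nat.card Y - 1) := by simpa using hE_le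

/-- In the galaxy construction on a finite metric space with `n` elements, an integer `a > 2`
and diameter greater than `(2a+1)^(n+2)`, if `k` is the minimal index at which the
construction stabilizes, then none of the sets `A k i` is all of `Y`. -/
theorem galaxy_ne_univ {Y : Type*} [MetricSpace Y] [Fintype Y] {n : ℕ} (a : ℕ) (ha : 2 < a)
    (y : Fin n → Y) (hy : Function.Bijective y) (hcard : Fintype.card Y = n)
    (hdiam : ((2 * a + 1 : ℕ) : ℝ) ^ (n + 2) < Metric.diam (Set.univ : Set Y))
    (k : ℕ)
    (hk : IsLeast {m : ℕ | ∀ i : Fin n, (galaxy a y m).1 i = (galaxy a y (m + 1)).1 i} k) :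
    ∀ i : Fin n, (galaxy a y k).1 i ≠ Set.univ := by
  have hpow : (a + 2) ^ (Nat.card Y - 1) ≤ (2 * a + 1) ^ (n + 2) :=
    pow_le_pow (by omega) (by omega) (by rw [Nat.card_eq_fintype_card]; omega)
  exact galaxy_ne_univ_general y (hdiam.trans_le' (mod_cast hpow)) k
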